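/- Let N, K, M be positive integers and let P_1, ..., P_M be M pairwise orthogonal orthogonal projection matrices in Matrix (Fin N) (Fin N) ℂ (i.e., each P_m is Hermitian and idempotent, P_b * P_a = 0 for a ≠ b), each of rank K. Then the set D of detectable errors, D = {E : Matrix (Fin N) (Fin N) ℂ | (∀ a b, a ≠ b → P_b * E * P_a = 0) ∧ (∀ a, ∃ λ : ℂ, P_a * E * P_a = λ • P_a)}, is a ℂ-linear subspace of Matrix (Fin N) (Fin N) ℂ of dimension N² − (M*K)² + M. -/

import Mathlib

open Matrix

/-!
Let `Q = ∑ₐ Pₐ`, again an idempotent. Since `P_b E P_a = P_b (Q E Q) P_a`, detectability of `E`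
depends only on the corner `Q E Q`, and it says that this corner lies in the span of the `Pₐ`.
The detectable operators are thus the preimage of an `M`-dimensional space under `E ↦ Q E Q`, a
linear map with range of dimension `(rank Q)² = (∑ₐ rank Pₐ)²`.
-/

section Algebra

variable (R : Type*) {A B ι : Type*} [CommSemiring R] [Semiring A] [Algebra R A] [Semiring B]
  [Algebra R B]

/-- The Knill–Laflamme conditions of a hybrid code: the errors detected by the code whose inner
codes are the images of the projections `e a`. -/
def detectable (e : ι → A) : Submodule R A where
  carrier := {x | (∀ a b, a ≠ b → e b * x * e a = 0) ∧ ∀ a, ∃ c : R, e a * x * e a = c • e a}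
  zero_mem' := ⟨fun a b _ => by simp, fun a => ⟨0, by simp⟩⟩
  add_mem' := by
    rintro x y ⟨hx, hx'⟩ ⟨hy, hy'⟩
    refine ⟨fun a b hab => ?_, fun a => ?_⟩
    · rw [mul_add, add_mul, hx a b hab, hy a b hab, add_zero]
    · obtain ⟨c, hc⟩ := hx' a
      obtain ⟨d, hd⟩ := hy' a
      exact ⟨c + d, by rw [mul_add, add_mul, hc, hd, add_smul]⟩
  smul_mem' := by
    rintro r x ⟨hx, hx'⟩
    refine ⟨fun a b hab => ?_, fun a => ?_⟩
    · rw [mul_smul_comm, smul_mul_assoc, hx a b hab, smul_zero]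
    · obtain ⟨c, hc⟩ := hx' a
      exact ⟨r * c, by rw [mul_smul_comm, smul_mul_assoc, hc, mul_smul]⟩

/-- The map `x ↦ q * x * q`; for `q` idempotent it is the projection of the algebra onto the
corner of `q`. -/
def compression (q : A) : A →ₗ[R] A :=
  LinearMap.mulLeftRight R (q, q)

variable {R}

@[simp]
lemma compression_apply (q x : A) : compression R q x = q * x * q :=
  LinearMap.mulLeftRight_apply (R := R) q q x

lemma map_range_compression (φ : A ≃ₐ[R] B) (q : A) :
    (LinearMap.range (compression R q)).map φ.toLinearMap =
      LinearMap.range (compression R (φ q)) := by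
  have hcomm : φ.toLinearMap ∘ₗ compression R q = compression R (φ q) ∘ₗ φ.toLinearMap := by
    ext x
    simp
  rw [← LinearMap.range_comp, hcomm,
    LinearMap.range_comp_of_range_eq_top _ (LinearMap.range_eq_top.2 φ.surjective)]

variable {e : ι → A} [Fintype ι] (he : OrthogonalIdempotents e)

include he

lemma sum_mul_of_orthogonalIdempotents (a : ι) : (∑ b, e b) * e a = e a := by
  classical
  simp [Finset.sum_mul, he.mul_eq]

lemma mul_compression_sum_mul (x : A) (a b : ι) :
    e b * compression R (∑ c, e c) x * e a = e b * x * e a := by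
  calc e b * compression R (∑ c, e c) x * e a
      = (e b * ∑ c, e c) * x * ((∑ c, e c) * e a) := by simp only [compression_apply, mul_assoc]
    _ = e b * x * e a := by
      rw [he.mul_sum_of_mem (Finset.mem_univ b), sum_mul_of_orthogonalIdempotents he]

lemma span_le_range_compression_sum :
    Submodule.span R (Set.range e) ≤ LinearMap.range (compression R (∑ a, e a)) := by
  rw [Submodule.span_le]
  rintro _ ⟨a, rfl⟩
  exact ⟨e a, by rw [compression_apply, sum_mul_of_orthogonalIdempotents he,
    he.mul_sum_of_mem (Finset.mem_univ a)]⟩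

lemma detectable_eq_comap_compression :
    detectable R e = (Submodule.span R (Set.range e)).comap (compression R (∑ a, e a)) := by
  classical
  ext x
  rw [Submodule.mem_comap, Submodule.mem_span_range_iff_exists_fun]
  constructor
  · rintro ⟨hoff, hdiag⟩
    choose c hc using hdiag
    refine ⟨c, ?_⟩
    rw [compression_apply, Finset.sum_mul, Finset.sum_mul]
    refine Finset.sum_congr rfl fun b _ => ?_
    rw [Finset.mul_sum, Finset.sum_eq_single b (fun a _ hab => hoff a b hab) (by simp), hc]
  · rintro ⟨c, hc⟩
    have hentry (a b : ι) : e b * x * e a = if b = a then c b • e b else 0 := by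
      rw [← mul_compression_sum_mul (R := R) he, ← hc]
      simp [Finset.mul_sum, he.mul_eq]
    exact ⟨fun a b hab => by rw [hentry, if_neg hab.symm],
      fun a => ⟨c a, by rw [hentry, if_pos rfl]⟩⟩

end Algebra

section Dimension

open Module

variable {F V W A ι : Type*} [Field F] [AddCommGroup V] [Module F V] [AddCommGroup W] [Module F W]
  [Ring A] [Algebra F A]

lemma linearIndependent_of_orthogonalIdempotents {e : ι → A} (he : OrthogonalIdempotents e)
    (hne : ∀ a, e a ≠ 0) : LinearIndependent F e := by
  classical
  rw [linearIndependent_iff']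
  intro s c hc a ha
  have hca : c a • e a = 0 := by
    simpa [Finset.mul_sum, he.mul_eq, ha] using congrArg (e a * ·) hc
  exact (smul_eq_zero.1 hca).resolve_right (hne a)

lemma finrank_comap_of_le_range [FiniteDimensional F V] (f : V →ₗ[F] W) {S : Submodule F W}
    (hS : S ≤ LinearMap.range f) :
    finrank F (S.comap f) = finrank F S + finrank F (LinearMap.ker f) := by
  have hrange : LinearMap.range (f.domRestrict (S.comap f)) = S := by
    rw [LinearMap.range_domRestrict, Submodule.map_comap_eq_of_le hS]
  have hker : finrank F (LinearMap.ker (f.domRestrict (S.comap f))) =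
      finrank F (LinearMap.ker f) := by
    rw [LinearMap.ker_domRestrict]
    exact (Submodule.comapSubtypeEquivOfLe (LinearMap.ker_le_comap f)).finrank_eq
  rw [← LinearMap.finrank_range_add_finrank_ker (f.domRestrict (S.comap f)), hrange, hker]

theorem finrank_detectable [Fintype ι] [FiniteDimensional F A] {e : ι → A}
    (he : OrthogonalIdempotents e) (hne : ∀ a, e a ≠ 0) :
    finrank F (detectable F e) =
      finrank F A - finrank F (LinearMap.range (compression F (∑ a, e a))) + Fintype.card ι := by
  rw [detectable_eq_comap_compression he,
    finrank_comap_of_le_range _ (span_le_range_compression_sum he),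
    finrank_span_eq_card (linearIndependent_of_orthogonalIdempotents he hne),
    ← LinearMap.finrank_range_add_finrank_ker (compression F (∑ a, e a)),
    Nat.add_sub_cancel_left, add_comm]

lemma finrank_range_compression_end [FiniteDimensional F V] {q : End F V}
    (hq : IsIdempotentElem q) :
    finrank F (LinearMap.range (compression F q)) = finrank F (LinearMap.range q) ^ 2 := by
  let U := LinearMap.range q
  let extend : End F U →ₗ[F] End F V :=
    LinearMap.compRight F U.subtype ∘ₗ LinearMap.lcomp F U q.rangeRestrict
  have hextend (g : End F U) (v : V) : extend g v = g (q.rangeRestrict v) := rfl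
  have hinj : Function.Injective extend :=
    (Function.Injective.injective_linearMapComp_left U.subtype_injective).comp
      (LinearMap.lcomp_injective_of_surjective _ q.surjective_rangeRestrict)
  have hrange : LinearMap.range extend = LinearMap.range (compression F q) := by
    apply le_antisymm
    · rintro _ ⟨g, rfl⟩
      refine ⟨extend g, LinearMap.ext fun v => ?_⟩
      have hqv : q.rangeRestrict (q v) = q.rangeRestrict v :=
        Subtype.ext (LinearMap.congr_fun hq v)
      simp only [compression_apply, Module.End.mul_apply, hextend, hqv]
      exact (LinearMap.IsIdempotentElem.mem_range_iff hq).1 (g (q.rangeRestrict v)).2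
    · rintro _ ⟨f, rfl⟩
      exact ⟨q.rangeRestrict ∘ₗ f ∘ₗ U.subtype, by ext v; simp [hextend]⟩
  rw [← hrange, LinearMap.finrank_range_of_inj hinj, finrank_linearMap, sq]

lemma finrank_range_sum_of_orthogonalIdempotents [Fintype ι] [FiniteDimensional F V]
    {e : ι → End F V} (he : OrthogonalIdempotents e) :
    finrank F (LinearMap.range (∑ a, e a)) = ∑ a, finrank F (LinearMap.range (e a)) := by
  classical
  let total : (∀ a, LinearMap.range (e a)) →ₗ[F] V :=
    LinearMap.lsum F _ F fun a => (LinearMap.range (e a)).subtype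
  have htotal (w) : total w = ∑ a, (w a : V) := by simp [total]
  have happly (a b : ι) (w : LinearMap.range (e b)) :
      e a w = if a = b then (w : V) else 0 := by
    obtain ⟨_, v, rfl⟩ := w
    rw [← Module.End.mul_apply, he.mul_eq]
    split_ifs with hab <;> simp [hab]
  have hproj (w) (a : ι) : e a (total w) = w a := by
    simp [htotal, happly]
  have hinj : Function.Injective total := fun w w' hw =>
    funext fun a => Subtype.ext (by rw [← hproj w, ← hproj w', hw])
  have hrange : LinearMap.range total = LinearMap.range (∑ a, e a) := by
    apply le_antisymm
    · rintro _ ⟨w, rfl⟩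
      exact ⟨total w, by
        rw [LinearMap.sum_apply, Finset.sum_congr rfl fun a _ => hproj w a, htotal]⟩
    · rintro _ ⟨v, rfl⟩
      exact ⟨fun a => (e a).rangeRestrict v, by simp [htotal]⟩
  rw [← hrange, LinearMap.finrank_range_of_inj hinj, finrank_pi_fintype]

end Dimension

section Matrix

variable {F n ι : Type*} [Field F] [Fintype n] [DecidableEq n] [Fintype ι]

lemma rank_sum_of_orthogonalIdempotents {P : ι → Matrix n n F} (hP : OrthogonalIdempotents P) :
    (∑ a, P a).rank = ∑ a, (P a).rank := by
  let φ : Matrix n n F ≃ₐ[F] Module.End F (n → F) := Matrix.toLinAlgEquiv'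
  have hrank (Q : Matrix n n F) : Q.rank = Module.finrank F (LinearMap.range (φ Q)) := rfl
  rw [hrank, map_sum φ]
  exact finrank_range_sum_of_orthogonalIdempotents
    (hP.map (φ : Matrix n n F →+* Module.End F (n → F)))

lemma finrank_range_compression_matrix {Q : Matrix n n F} (hQ : IsIdempotentElem Q) :
    Module.finrank F (LinearMap.range (compression F Q)) = Q.rank ^ 2 := by
  let φ : Matrix n n F ≃ₐ[F] Module.End F (n → F) := Matrix.toLinAlgEquiv'
  calc Module.finrank F (LinearMap.range (compression F Q))
      = Module.finrank F ((LinearMap.range (compression F Q)).map φ.toLinearMap) :=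
        (φ.toLinearEquiv.finrank_map_eq _).symm
    _ = Module.finrank F (LinearMap.range (compression F (φ Q))) := by rw [map_range_compression]
    _ = Q.rank ^ 2 := finrank_range_compression_end (hQ.map φ)

theorem hybrid_detectable_dimension_general {P : ι → Matrix n n F} (hP : OrthogonalIdempotents P)
    (hne : ∀ a, P a ≠ 0) :
    Module.finrank F (detectable F P) =
      Fintype.card n ^ 2 - (∑ a, (P a).rank) ^ 2 + Fintype.card ι := by
  rw [finrank_detectable hP hne, finrank_range_compression_matrix hP.isIdempotentElem_sum,
    rank_sum_of_orthogonalIdempotents hP, Module.finrank_matrix, Module.finrank_self, mul_one, ← sq]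

end Matrix

theorem hybrid_detectable_dimension (N K M : ℕ) (hN : 0 < N) (hK : 0 < K) (hM : 0 < M)
    (P : Fin M → Matrix (Fin N) (Fin N) ℂ)
    (hHerm : ∀ a, (P a).IsHermitian)
    (hIdem : ∀ a, P a * P a = P a)
    (hOrth : ∀ a b : Fin M, a ≠ b → P b * P a = 0)
    (hRank : ∀ a, (P a).rank = K) :
    ∃ D : Submodule ℂ (Matrix (Fin N) (Fin N) ℂ),
      (D : Set (Matrix (Fin N) (Fin N) ℂ)) =
        {E | (∀ a b : Fin M, a ≠ b → P b * E * P a = 0) ∧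
             (∀ a, ∃ lam : ℂ, P a * E * P a = lam • P a)} ∧
      Module.finrank ℂ D = N ^ 2 - (M * K) ^ 2 + M := by
  have hP : OrthogonalIdempotents P := ⟨hIdem, fun a b hab => hOrth b a hab.symm⟩
  have hne (a : Fin M) : P a ≠ 0 := by
    intro h
    rw [← hRank a, h, Matrix.rank_zero] at hK
    exact hK.false
  exact ⟨detectable ℂ P, rfl, by
    simpa [hRank] using hybrid_detectable_dimension_general hP hne⟩
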